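/- arXiv:2307.15657 — 2 statements merged into one kernel-verified Lean document; each statement's English description precedes it below -/
import Mathlib

section
/- Let n be an odd positive integer and k a nonnegative even integer with gcd(n,k)=1. Let F be the finite field of order 3^n, and let d be a positive integer with (3^k+1)·d ≡ 3^n+1 (mod 2(3^n−1)) (i.e., d represents the exponent (3^n+1)/(3^k+1) modulo 3^n−1). Let f : F → F be f(x)=x^d and let Δf : F → F be (Δf)(x)=f(x+1)−f(x). Then for every c ∈ F, the cardinality of the fiber (Δf)^{-1}({c}) equals 1 if c lies in the prime subfield F_3, and equals 1+η(1−c^{3^k+1}) otherwise, where η is the quadratic character of F. In particular, f is almost perfect nonlinear: every fiber of Δf has cardinality at most 2, and Δf has exactly (3^n−3)/2 fibers of cardinality 0, exactly 3 fibers of cardinality 1, and exactly (3^n−3)/2 fibers of cardinality 2. -/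
/-!
Write `q = 3 ^ n` and `Q = 3 ^ k`. Since `d` is even and `(Q + 1) d ≡ 2` modulo `q - 1`, every point
is `± y ^ (Q + 1)` with `f (± y ^ (Q + 1)) = y ^ 2`. So `x` lies in the fiber over `c` when
`x + 1 = ε u ^ (Q + 1)` and `x = τ ε v ^ (Q + 1)` for signs `ε`, `τ` and `u ^ 2 - v ^ 2 = c`.

Put `u = s + e` and `v = s - e`, so that `s e = c` in characteristic three. Expanding, the condition
on `s` and `e` becomes `A + B = -1`, where `A`, `B` are `ε s ^ Q e`, `ε e ^ Q s` if `τ = 1` and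
`ε s ^ (Q + 1)`, `ε e ^ (Q + 1)` if `τ = -1`. In both cases `A B = c ^ (Q + 1)`, so that `A` and `B`
are the roots of a quadratic polynomial of discriminant `1 - c ^ (Q + 1)`. Up to the symmetry
exchanging `s` and `e`, `A` is a prescribed root, and it determines `ε` and `± s` because
`gcd (Q ± 1, q - 1) = 2` and `-1` is not a square. Hence, when `c ≠ 0` and `1 - c ^ (Q + 1)` is a
square, each `τ` contributes exactly one point; the two points coincide only if `x (x + 1) = 0`,
that is, for `c = ± 1`.
-/

section ThreePowers

theorem odd_three_pow (k : ℕ) : Odd (3 ^ k) := Odd.pow (by decide)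

theorem three_pow_mod_four_of_even {k : ℕ} (hk : Even k) : 3 ^ k % 4 = 1 := by
  obtain ⟨j, rfl⟩ := hk
  rw [← two_mul, pow_mul, Nat.pow_mod]
  norm_num

theorem three_pow_mod_four_of_odd {n : ℕ} (hn : Odd n) : 3 ^ n % 4 = 3 := by
  obtain ⟨j, rfl⟩ := hn
  rw [pow_succ, Nat.mul_mod, three_pow_mod_four_of_even (even_two_mul j)]

theorem modEq_two_of_modEq_add_one {a q : ℕ} (hq : 1 ≤ q) (h : a ≡ q + 1 [MOD 2 * (q - 1)]) :
    a ≡ 2 [MOD q - 1] := by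
  refine (h.of_dvd (dvd_mul_left _ _)).trans ?_
  rw [show q + 1 = (q - 1) + 2 by omega]
  exact Nat.add_modEq_left

theorem even_of_modEq_pow_add_one {n k d : ℕ} (hn : Odd n) (hk : Even k)
    (hd : (3 ^ k + 1) * d ≡ 3 ^ n + 1 [MOD 2 * (3 ^ n - 1)]) : Even d := by
  have hk4 := three_pow_mod_four_of_even hk
  have hn4 := three_pow_mod_four_of_odd hn
  have hmod : (3 ^ k + 1) * d % 4 = (3 ^ n + 1) % 4 := hd.of_dvd (by omega)
  rw [Nat.mul_mod, show (3 ^ k + 1) % 4 = 2 by omega, show (3 ^ n + 1) % 4 = 0 by omega] at hmod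
  rw [Nat.even_iff]
  omega

end ThreePowers

section FiniteFieldPowers

variable {F : Type*} [Field F]

theorem sign_eq_of_mul_sq_eq_mul_sq (hneg : ¬ IsSquare (-1 : F)) {ε ε' y z : F} (hε : ε ^ 2 = 1)
    (hε' : ε' ^ 2 = 1) (hy : y ≠ 0) (h : ε * y ^ 2 = ε' * z ^ 2) : ε = ε' := by
  have ratio_eq : ε * ε' = (z / y) ^ 2 := by
    field_simp
    linear_combination ε' * h + z ^ 2 * hε'
  rcases sq_eq_one_iff.mp (show (ε * ε') ^ 2 = 1 by rw [mul_pow, hε, hε', one_mul])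
    with hone | hneg_one
  · linear_combination ε' * hone - ε * hε'
  · exact absurd ⟨z / y, by rw [← hneg_one, ratio_eq, sq]⟩ hneg

theorem isSquare_or_isSquare_neg [Finite F] (hneg : ¬ IsSquare (-1 : F)) (y : F) :
    IsSquare y ∨ IsSquare (-y) := by
  classical
  have := Fintype.ofFinite F
  refine or_iff_not_imp_left.mpr fun hy => ?_
  by_contra hny
  rw [← quadraticChar_neg_one_iff_not_isSquare] at hneg hy hny
  rw [neg_eq_neg_one_mul, map_mul, hneg, hy] at hny
  norm_num at hny

variable [Fintype F]

theorem exists_pow_eq_pow_gcd (m : ℕ) {y : F} (hy : y ≠ 0) :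
    ∃ z : F, z ≠ 0 ∧ z ^ m = y ^ m.gcd (Fintype.card F - 1) := by
  set N := Fintype.card F - 1
  refine ⟨y ^ m.gcdA N, zpow_ne_zero _ hy, ?_⟩
  have hN : y ^ N = 1 := FiniteField.pow_card_sub_one_eq_one y hy
  rw [← zpow_natCast y (m.gcd N), Nat.gcd_eq_gcd_ab, zpow_add₀ hy, zpow_mul y N, zpow_natCast y N,
    hN, one_zpow, mul_one, mul_comm, zpow_mul, zpow_natCast]

variable {m : ℕ}

theorem exists_sign_mul_pow_eq (hneg : ¬ IsSquare (-1 : F))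
    (hm : m.gcd (Fintype.card F - 1) = 2) {y : F} (hy : y ≠ 0) :
    ∃ ε s : F, ε ^ 2 = 1 ∧ s ≠ 0 ∧ ε * s ^ m = y := by
  obtain ⟨ε, z, hε, rfl⟩ : ∃ ε z : F, ε ^ 2 = 1 ∧ ε * z ^ 2 = y := by
    rcases isSquare_or_isSquare_neg hneg y with ⟨z, hz⟩ | ⟨z, hz⟩
    · exact ⟨1, z, one_pow 2, by rw [hz]; ring⟩
    · exact ⟨-1, z, neg_one_sq, by linear_combination hz⟩
  have hz : z ≠ 0 := by
    rintro rfl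
    simp at hy
  obtain ⟨s, hs, hsm⟩ := exists_pow_eq_pow_gcd m hz
  exact ⟨ε, s, hε, hs, by rw [hsm, hm]⟩

theorem sq_eq_sq_of_pow_eq_pow (hm : m.gcd (Fintype.card F - 1) = 2) {s t : F} (hs : s ≠ 0)
    (ht : t ≠ 0) (h : s ^ m = t ^ m) : s ^ 2 = t ^ 2 := by
  have ratio_pow : (s / t) ^ m = 1 := by rw [div_pow, h, div_self (pow_ne_zero m ht)]
  have ratio_sq : (s / t) ^ 2 = 1 := by
    rw [← hm, pow_gcd_eq_one]
    exact ⟨ratio_pow, FiniteField.pow_card_sub_one_eq_one _ (div_ne_zero hs ht)⟩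
  rwa [div_pow, div_eq_one_iff_eq (pow_ne_zero 2 ht)] at ratio_sq

theorem sign_mul_pow_injective (hneg : ¬ IsSquare (-1 : F))
    (hm : m.gcd (Fintype.card F - 1) = 2) {ε ε' s t : F} (hε : ε ^ 2 = 1) (hε' : ε' ^ 2 = 1)
    (hs : s ≠ 0) (ht : t ≠ 0) (h : ε * s ^ m = ε' * t ^ m) : ε = ε' ∧ s ^ 2 = t ^ 2 := by
  obtain ⟨j, hj⟩ : 2 ∣ m := hm ▸ Nat.gcd_dvd_left m _
  obtain rfl : ε = ε' := sign_eq_of_mul_sq_eq_mul_sq hneg hε hε' (pow_ne_zero j hs) (z := t ^ j)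
    (by rw [← pow_mul', ← pow_mul', ← hj]; exact h)
  have hε0 : ε ≠ 0 := by
    rintro rfl
    simp at hε
  exact ⟨rfl, sq_eq_sq_of_pow_eq_pow hm hs ht (mul_left_cancel₀ hε0 h)⟩

end FiniteFieldPowers

section CharThree

variable {R : Type*} [CommRing R] [CharP R 3]

theorem three_eq_zero_of_charP_three : (3 : R) = 0 := mod_cast CharP.cast_eq_zero R 3

theorem add_pow_sub_sub_pow_of_charP_three (k : ℕ) (s e : R) :
    (s + e) ^ (3 ^ k + 1) - (s - e) ^ (3 ^ k + 1) = -(s ^ 3 ^ k * e + e ^ 3 ^ k * s) := by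
  have : Fact (Nat.Prime 3) := ⟨Nat.prime_three⟩
  rw [pow_succ, pow_succ, add_pow_char_pow, sub_pow_char_pow]
  linear_combination (s ^ 3 ^ k * e + e ^ 3 ^ k * s) * three_eq_zero_of_charP_three (R := R)

theorem add_pow_add_sub_pow_of_charP_three (k : ℕ) (s e : R) :
    (s + e) ^ (3 ^ k + 1) + (s - e) ^ (3 ^ k + 1) = -(s ^ (3 ^ k + 1) + e ^ (3 ^ k + 1)) := by
  have : Fact (Nat.Prime 3) := ⟨Nat.prime_three⟩
  rw [pow_succ, pow_succ, add_pow_char_pow, sub_pow_char_pow]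
  linear_combination (s ^ 3 ^ k * s + e ^ 3 ^ k * e) * three_eq_zero_of_charP_three (R := R)

end CharThree

section Branches

variable {F : Type*} [Field F] {Q m : ℕ} {c τ κ x : F}

/-- The part of relative sign `τ` of the fiber over `c`: both `x + 1` and `x` are signed
`(Q + 1)`-st powers, of elements `u` and `v` with `u ^ 2 - v ^ 2 = c`, and their signs differ by the
factor `τ`. A sign is encoded as an element of `F` of square one. -/
def FiberBranch (Q : ℕ) (c τ x : F) : Prop :=
  ∃ ε u v : F, ε ^ 2 = 1 ∧ x + 1 = ε * u ^ (Q + 1) ∧ x = τ * ε * v ^ (Q + 1) ∧ u ^ 2 - v ^ 2 = c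

/-- The monomials `κ * s ^ m` and `κ * e ^ m` (for `s * e = c`) have product `c ^ (Q + 1)`, and up
to sign their sum is the difference that `FiberBranch Q c τ` prescribes, so that the branch of sign
`τ` is governed by a quadratic equation in `κ * s ^ m`. -/
structure BranchExpansion (Q : ℕ) (c τ κ : F) (m : ℕ) : Prop where
  sum_eq : ∀ s e : F, s * e = c →
    (s + e) ^ (Q + 1) - τ * (s - e) ^ (Q + 1) = -(κ * s ^ m + κ * e ^ m)
  prod_eq : κ ^ 2 * c ^ m = c ^ (Q + 1)

theorem sub_pow_succ_eq_of_mul_eq (hQ : Odd Q) {s e s' e' : F} (hs : s ≠ 0) (h : s * e = s' * e')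
    (hsq : s ^ 2 = s' ^ 2) : (s - e) ^ (Q + 1) = (s' - e') ^ (Q + 1) := by
  obtain ⟨j, hj⟩ := hQ.add_one
  have he : e ^ 2 = e' ^ 2 := by
    apply mul_left_cancel₀ (pow_ne_zero 2 hs)
    linear_combination (s * e + s' * e') * h - e' ^ 2 * hsq
  have hsub : (s - e) ^ 2 = (s' - e') ^ 2 := by linear_combination hsq + he - 2 * h
  rw [hj, ← two_mul, pow_mul, hsub, pow_mul]

theorem FiberBranch.mul_add_one_eq_zero (hneg : ¬ IsSquare (-1 : F)) (hQ : Odd Q)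
    (hone : FiberBranch Q c 1 x) (hneg_one : FiberBranch Q c (-1) x) : x * (x + 1) = 0 := by
  obtain ⟨ε, u, v, hε, hu, hv, -⟩ := hone
  obtain ⟨ε', u', v', hε', hu', hv', -⟩ := hneg_one
  obtain ⟨j, hj⟩ := hQ.add_one
  rw [hj, ← two_mul, pow_mul'] at hu hv hu' hv'
  have hprod : x * (x + 1) = (u ^ j * v ^ j) ^ 2 := by
    linear_combination (x + 1) * hv + ε * (v ^ j) ^ 2 * hu + (u ^ j * v ^ j) ^ 2 * hε
  have hprod' : x * (x + 1) = -(u' ^ j * v' ^ j) ^ 2 := by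
    linear_combination (x + 1) * hv' - ε' * (v' ^ j) ^ 2 * hu' - (u' ^ j * v' ^ j) ^ 2 * hε'
  by_contra hx
  have hw : u ^ j * v ^ j ≠ 0 := fun h => hx (by rw [hprod, h]; ring)
  have hsign : (1 : F) = -1 := sign_eq_of_mul_sq_eq_mul_sq hneg (one_pow 2) neg_one_sq hw
    (z := u' ^ j * v' ^ j) (by linear_combination hprod' - hprod)
  exact hneg (hsign ▸ IsSquare.one)

theorem eq_one_of_fiberBranch_zero [CharP F 3] (hQ : Odd Q) (hτ : τ ^ 2 = 1)
    (h : FiberBranch Q 0 τ x) : x = 1 := by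
  obtain ⟨ε, u, v, -, hu, hv, huv⟩ := h
  obtain ⟨j, hj⟩ := hQ.add_one
  have hpow : u ^ (Q + 1) = v ^ (Q + 1) := by
    rw [hj, ← two_mul, pow_mul, pow_mul, sub_eq_zero.mp huv]
  rw [hpow] at hu
  have h3 : (3 : F) = 0 := three_eq_zero_of_charP_three
  rcases sq_eq_one_iff.mp hτ with rfl | rfl
  · exact absurd (show (1 : F) = 0 by linear_combination hu - hv) one_ne_zero
  · linear_combination -hu - hv + x * h3

theorem BranchExpansion.mul_eq (hB : BranchExpansion Q c τ κ m) {ε s e : F} (hε : ε ^ 2 = 1)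
    (hse : s * e = c) : ε * (κ * s ^ m) * (ε * (κ * e ^ m)) = c ^ (Q + 1) := by
  rw [← hB.prod_eq, ← hse, mul_pow]
  linear_combination κ ^ 2 * (s ^ m * e ^ m) * hε

theorem BranchExpansion.sub_one_sq_eq [CharP F 3] (hB : BranchExpansion Q c τ κ m) {ε s e : F}
    (hε : ε ^ 2 = 1) (hse : s * e = c) (hsum : ε * (κ * s ^ m) + ε * (κ * e ^ m) = -1) :
    (ε * (κ * s ^ m) - 1) ^ 2 = 1 - c ^ (Q + 1) := by
  linear_combination ε * (κ * s ^ m) * hsum - hB.mul_eq hε hse -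
    ε * (κ * s ^ m) * three_eq_zero_of_charP_three (R := F)

section Expansion

variable [CharP F 3]

theorem BranchExpansion.one (k : ℕ) (c : F) : BranchExpansion (3 ^ k) c 1 c (3 ^ k - 1) where
  sum_eq := by
    rintro s e rfl
    have hQ (y : F) : y ^ 3 ^ k = y ^ (3 ^ k - 1) * y := by
      rw [← pow_succ, Nat.sub_add_cancel (one_le_pow₀ (by norm_num))]
    rw [one_mul, add_pow_sub_sub_pow_of_charP_three, hQ, hQ]
    ring
  prod_eq := by
    rw [← pow_add]
    congr 1
    have : 1 ≤ 3 ^ k := one_le_pow₀ (by norm_num)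
    omega

theorem BranchExpansion.neg_one (k : ℕ) (c : F) :
    BranchExpansion (3 ^ k) c (-1) 1 (3 ^ k + 1) where
  sum_eq s e _ := by
    linear_combination add_pow_add_sub_pow_of_charP_three k s e
  prod_eq := by ring

theorem fiberBranch_iff (hB : BranchExpansion Q c τ κ m) :
    FiberBranch Q c τ x ↔ ∃ ε s e : F, ε ^ 2 = 1 ∧ s * e = c ∧
      ε * (κ * s ^ m) + ε * (κ * e ^ m) = -1 ∧ x = τ * ε * (s - e) ^ (Q + 1) := by
  have h3 : (3 : F) = 0 := three_eq_zero_of_charP_three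
  constructor
  · rintro ⟨ε, u, v, hε, hu, hv, huv⟩
    have hse : -(u + v) * (v - u) = c := by linear_combination huv
    have hadd : -(u + v) + (v - u) = u := by linear_combination -u * h3
    have hsub : -(u + v) - (v - u) = v := by linear_combination -v * h3
    have hsum := hB.sum_eq _ _ hse
    rw [hadd, hsub] at hsum
    exact ⟨ε, -(u + v), v - u, hε, hse, by linear_combination ε * hsum + hu - hv, by rw [hsub, hv]⟩
  · rintro ⟨ε, s, e, hε, hse, hsum, rfl⟩
    exact ⟨ε, s + e, s - e, hε, by linear_combination -ε * hB.sum_eq s e hse + hsum, rfl,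
      by linear_combination 4 * hse + c * h3⟩

theorem FiberBranch.isSquare (hB : BranchExpansion Q c τ κ m) (h : FiberBranch Q c τ x) :
    IsSquare (1 - c ^ (Q + 1)) := by
  obtain ⟨ε, s, e, hε, hse, hsum, -⟩ := (fiberBranch_iff hB).mp h
  exact ⟨_, (hB.sub_one_sq_eq hε hse hsum).symm.trans (sq _)⟩

theorem FiberBranch.exists_root_eq (hB : BranchExpansion Q c τ κ m) (hQ : Odd Q) {r : F}
    (hr : 1 - c ^ (Q + 1) = r ^ 2) (h : FiberBranch Q c τ x) :
    ∃ ε s e : F, ε ^ 2 = 1 ∧ s * e = c ∧ ε * (κ * s ^ m) = 1 + r ∧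
      x = τ * ε * (s - e) ^ (Q + 1) := by
  obtain ⟨ε, s, e, hε, hse, hsum, hx⟩ := (fiberBranch_iff hB).mp h
  have hroot := (hB.sub_one_sq_eq hε hse hsum).trans hr
  rcases sq_eq_sq_iff_eq_or_eq_neg.mp hroot with hplus | hminus
  · exact ⟨ε, s, e, hε, hse, by linear_combination hplus, hx⟩
  · refine ⟨ε, e, s, hε, by rw [mul_comm, hse], ?_, by rw [hx, ← neg_sub, hQ.add_one.neg_pow]⟩
    linear_combination hsum - hminus - three_eq_zero_of_charP_three (R := F)

theorem exists_fiberBranch [Fintype F] (hneg : ¬ IsSquare (-1 : F))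
    (hm : m.gcd (Fintype.card F - 1) = 2) (hB : BranchExpansion Q c τ κ m) (hc : c ≠ 0)
    (hκ : κ ≠ 0) (hsq : IsSquare (1 - c ^ (Q + 1))) : ∃ x, FiberBranch Q c τ x := by
  obtain ⟨r, hr⟩ := hsq
  have hr1 : 1 + r ≠ 0 := fun h =>
    pow_ne_zero (Q + 1) hc (by linear_combination -hr + (1 - r) * h)
  obtain ⟨ε, s, hε, hs, hεs⟩ := exists_sign_mul_pow_eq hneg hm (div_ne_zero hr1 hκ)
  have hA : ε * (κ * s ^ m) = 1 + r := by
    rw [eq_div_iff hκ] at hεs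
    linear_combination hεs
  have hse : s * (c / s) = c := mul_div_cancel₀ c hs
  have hA' : ε * (κ * (c / s) ^ m) = 1 - r := by
    apply mul_left_cancel₀ hr1
    linear_combination hB.mul_eq hε hse - hr - ε * (κ * (c / s) ^ m) * hA
  refine ⟨_, (fiberBranch_iff hB).mpr ⟨ε, s, c / s, hε, hse, ?_, rfl⟩⟩
  linear_combination hA + hA' + three_eq_zero_of_charP_three (R := F)

theorem FiberBranch.unique [Fintype F] (hneg : ¬ IsSquare (-1 : F))
    (hm : m.gcd (Fintype.card F - 1) = 2) (hB : BranchExpansion Q c τ κ m) (hQ : Odd Q)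
    (hc : c ≠ 0) (hκ : κ ≠ 0) {y : F} (hx : FiberBranch Q c τ x) (hy : FiberBranch Q c τ y) :
    x = y := by
  obtain ⟨r, hr⟩ := hx.isSquare hB
  rw [← sq] at hr
  obtain ⟨ε, s, e, hε, hse, hA, rfl⟩ := hx.exists_root_eq hB hQ hr
  obtain ⟨ε', s', e', hε', hse', hA', rfl⟩ := hy.exists_root_eq hB hQ hr
  have hs : s ≠ 0 := left_ne_zero_of_mul (hse ▸ hc)
  have hs' : s' ≠ 0 := left_ne_zero_of_mul (hse' ▸ hc)
  obtain ⟨rfl, hsq⟩ := sign_mul_pow_injective hneg hm hε hε' hs hs'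
    (mul_left_cancel₀ hκ (by linear_combination hA - hA'))
  rw [sub_pow_succ_eq_of_mul_eq hQ hs (hse.trans hse'.symm) hsq]

end Expansion

end Branches

section PowerFibers

variable {F : Type*} [Field F]

/-- The fiber over `c` of the discrete derivative of `x ↦ x ^ d`. -/
def powDerivFiber (d : ℕ) (c : F) : Set F := {x | (x + 1) ^ d - x ^ d = c}

theorem mem_powDerivFiber {d : ℕ} {c x : F} :
    x ∈ powDerivFiber d c ↔ (x + 1) ^ d - x ^ d = c := Iff.rfl

theorem card_pow_add_sub_pow_eq (d : ℕ) {a : F} (ha : a ≠ 0) (b : F) :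
    Nat.card {x : F // (x + a) ^ d - x ^ d = b} = (powDerivFiber d (b / a ^ d)).ncard := by
  refine Nat.card_congr ((Equiv.divRight₀ a ha).subtypeEquiv fun x => ?_)
  have hshift : x / a + 1 = (x + a) / a := by field_simp
  rw [Equiv.divRight₀_apply, mem_powDerivFiber, hshift, div_pow, div_pow, ← sub_div,
    div_left_inj' (pow_ne_zero d ha)]

variable [Fintype F]

/-- The even positive exponents `d` that represent `2 / (3 ^ k + 1)` modulo `|F| - 1`, over a field
of characteristic three in which `-1` is not a square and `gcd (3 ^ k - 1, |F| - 1) = 2`. For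
`|F| = 3 ^ n`, the last two conditions say that `n` is odd and prime to `k`. -/
structure IsQuotientExponent (F : Type*) [Field F] [Fintype F] (k d : ℕ) : Prop where
  charP : CharP F 3
  not_isSquare_neg_one : ¬ IsSquare (-1 : F)
  gcd_sub_one : (3 ^ k - 1).gcd (Fintype.card F - 1) = 2
  pos : 0 < d
  even : Even d
  modEq : (3 ^ k + 1) * d ≡ 2 [MOD Fintype.card F - 1]

namespace IsQuotientExponent

variable {k d : ℕ} {c τ x : F}

theorem of_card {n : ℕ} (hn : Odd n) (hgcd : n.gcd k = 1) (hF : Fintype.card F = 3 ^ n)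
    (hpos : 0 < d) (heven : Even d) (hd : (3 ^ k + 1) * d ≡ 2 [MOD 3 ^ n - 1]) :
    IsQuotientExponent F k d where
  charP := by
    have : Fact (Nat.Prime 3) := ⟨Nat.prime_three⟩
    exact charP_of_card_eq_prime_pow hF
  not_isSquare_neg_one := by
    rw [FiniteField.isSquare_neg_one_iff, hF, not_not]
    exact three_pow_mod_four_of_odd hn
  gcd_sub_one := by rw [hF, Nat.pow_sub_one_gcd_pow_sub_one, Nat.gcd_comm, hgcd, pow_one]
  pos := hpos
  even := heven
  modEq := by rwa [hF]

theorem two_dvd_card_sub_one (h : IsQuotientExponent F k d) : 2 ∣ Fintype.card F - 1 :=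
  h.gcd_sub_one ▸ Nat.gcd_dvd_right _ _

theorem gcd_add_one (h : IsQuotientExponent F k d) :
    (3 ^ k + 1).gcd (Fintype.card F - 1) = 2 := by
  refine Nat.dvd_antisymm ?_ (Nat.dvd_gcd (odd_three_pow k).add_one.two_dvd h.two_dvd_card_sub_one)
  exact ((h.modEq.of_dvd (Nat.gcd_dvd_right _ _)).dvd_iff dvd_rfl).mp
    ((Nat.gcd_dvd_left _ _).mul_right d)

theorem pow_pow_eq_sq (h : IsQuotientExponent F k d) (y : F) : (y ^ (3 ^ k + 1)) ^ d = y ^ 2 := by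
  rcases eq_or_ne y 0 with rfl | hy
  · simp [h.pos.ne']
  · rw [← pow_mul]
    exact pow_eq_pow_of_modEq h.modEq (FiniteField.pow_card_sub_one_eq_one y hy)

theorem sign_mul_pow_pow (h : IsQuotientExponent F k d) {ε : F} (hε : ε ^ 2 = 1) (y : F) :
    (ε * y ^ (3 ^ k + 1)) ^ d = y ^ 2 := by
  obtain ⟨j, hj⟩ := h.even
  rw [mul_pow, h.pow_pow_eq_sq, hj, ← two_mul, pow_mul, hε, one_pow, one_mul]

theorem exists_sign_mul_pow (h : IsQuotientExponent F k d) (x : F) :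
    ∃ ε y : F, ε ^ 2 = 1 ∧ x = ε * y ^ (3 ^ k + 1) := by
  rcases eq_or_ne x 0 with rfl | hx
  · exact ⟨1, 0, one_pow 2, by simp⟩
  · obtain ⟨ε, y, hε, -, hy⟩ := exists_sign_mul_pow_eq h.not_isSquare_neg_one h.gcd_add_one hx
    exact ⟨ε, y, hε, hy.symm⟩

theorem mem_powDerivFiber_iff (h : IsQuotientExponent F k d) :
    x ∈ powDerivFiber d c ↔ ∃ τ : F, τ ^ 2 = 1 ∧ FiberBranch (3 ^ k) c τ x := by
  constructor
  · intro hx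
    obtain ⟨ε, u, hε, hu⟩ := h.exists_sign_mul_pow (x + 1)
    obtain ⟨δ, v, hδ, hv⟩ := h.exists_sign_mul_pow x
    refine ⟨δ * ε, by rw [mul_pow, hδ, hε, one_mul], ε, u, v, hε, hu, ?_, ?_⟩
    · linear_combination hv - δ * v ^ (3 ^ k + 1) * hε
    · rw [← h.sign_mul_pow_pow hε u, ← h.sign_mul_pow_pow hδ v, ← hu, ← hv]
      exact hx
  · rintro ⟨τ, hτ, ε, u, v, hε, hu, hv, rfl⟩
    have hτε : (τ * ε) ^ 2 = 1 := by rw [mul_pow, hτ, hε, one_mul]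
    rw [mem_powDerivFiber, hu, h.sign_mul_pow_pow hε]
    nth_rw 1 [hv]
    rw [h.sign_mul_pow_pow hτε]

theorem exists_branchExpansion (h : IsQuotientExponent F k d) (hc : c ≠ 0) (hτ : τ ^ 2 = 1) :
    ∃ κ m, κ ≠ 0 ∧ m.gcd (Fintype.card F - 1) = 2 ∧ BranchExpansion (3 ^ k) c τ κ m := by
  have := h.charP
  rcases sq_eq_one_iff.mp hτ with rfl | rfl
  · exact ⟨c, _, hc, h.gcd_sub_one, .one k c⟩
  · exact ⟨1, _, one_ne_zero, h.gcd_add_one, .neg_one k c⟩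

theorem existsUnique_fiberBranch (h : IsQuotientExponent F k d) (hc : c ≠ 0)
    (hsq : IsSquare (1 - c ^ (3 ^ k + 1))) (hτ : τ ^ 2 = 1) :
    ∃! x, FiberBranch (3 ^ k) c τ x := by
  have := h.charP
  obtain ⟨κ, m, hκ, hm, hB⟩ := h.exists_branchExpansion hc hτ
  obtain ⟨x, hx⟩ := exists_fiberBranch h.not_isSquare_neg_one hm hB hc hκ hsq
  exact ⟨x, hx, fun y hy => hy.unique h.not_isSquare_neg_one hm hB (odd_three_pow k) hc hκ hx⟩

theorem powDerivFiber_zero (h : IsQuotientExponent F k d) : powDerivFiber d (0 : F) = {1} := by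
  have := h.charP
  refine Set.eq_singleton_iff_unique_mem.mpr ⟨?_, fun x hx => ?_⟩
  · have htwo : (1 + 1 : F) = -1 := by linear_combination three_eq_zero_of_charP_three (R := F)
    rw [mem_powDerivFiber, htwo, h.even.neg_pow, sub_self]
  · obtain ⟨τ, hτ, hx⟩ := h.mem_powDerivFiber_iff.mp hx
    exact eq_one_of_fiberBranch_zero (odd_three_pow k) hτ hx

theorem powDerivFiber_eq_singleton (h : IsQuotientExponent F k d) (hc : c ^ 2 = 1)
    (hx : ∀ τ : F, τ ^ 2 = 1 → FiberBranch (3 ^ k) c τ x) : powDerivFiber d c = {x} := by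
  have hc0 : c ≠ 0 := by
    rintro rfl
    simp at hc
  have hdisc : 1 - c ^ (3 ^ k + 1) = 0 := by
    obtain ⟨j, hj⟩ := (odd_three_pow k).add_one
    rw [hj, ← two_mul, pow_mul, hc, one_pow, sub_self]
  refine Set.eq_singleton_iff_unique_mem.mpr
    ⟨h.mem_powDerivFiber_iff.mpr ⟨1, one_pow 2, hx 1 (one_pow 2)⟩, fun y hy => ?_⟩
  obtain ⟨τ, hτ, hy⟩ := h.mem_powDerivFiber_iff.mp hy
  exact (h.existsUnique_fiberBranch hc0 (hdisc ▸ IsSquare.zero) hτ).unique hy (hx τ hτ)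

theorem powDerivFiber_one (h : IsQuotientExponent F k d) : powDerivFiber d (1 : F) = {0} :=
  h.powDerivFiber_eq_singleton (one_pow 2) fun _ _ => ⟨1, 1, 0, by simp, by simp, by simp, by simp⟩

theorem powDerivFiber_neg_one (h : IsQuotientExponent F k d) :
    powDerivFiber d (-1 : F) = {-1} :=
  h.powDerivFiber_eq_singleton neg_one_sq fun τ hτ =>
    ⟨-τ, 0, 1, by rw [neg_sq, hτ], by simp, by linear_combination hτ, by simp⟩

theorem one_sub_pow_ne_zero (h : IsQuotientExponent F k d) (hc1 : c ≠ 1) (hc2 : c ≠ -1) :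
    1 - c ^ (3 ^ k + 1) ≠ 0 := by
  intro hdisc
  have hsq : c ^ 2 = 1 := by rw [← h.pow_pow_eq_sq, ← sub_eq_zero.mp hdisc, one_pow]
  rcases sq_eq_one_iff.mp hsq with h1 | h2
  exacts [hc1 h1, hc2 h2]

theorem ncard_powDerivFiber_of_mem_primeField (h : IsQuotientExponent F k d)
    (hc : c = 0 ∨ c = 1 ∨ c = -1) : (powDerivFiber d c).ncard = 1 := by
  rw [Set.ncard_eq_one]
  rcases hc with rfl | rfl | rfl
  exacts [⟨1, h.powDerivFiber_zero⟩, ⟨0, h.powDerivFiber_one⟩, ⟨-1, h.powDerivFiber_neg_one⟩]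

theorem ncard_powDerivFiber_of_isSquare (h : IsQuotientExponent F k d)
    (hc : ¬ (c = 0 ∨ c = 1 ∨ c = -1)) (hsq : IsSquare (1 - c ^ (3 ^ k + 1))) :
    (powDerivFiber d c).ncard = 2 := by
  obtain ⟨hc0, hc1, hc2⟩ : c ≠ 0 ∧ c ≠ 1 ∧ c ≠ -1 := by simpa only [not_or] using hc
  obtain ⟨x, hx, hx_unique⟩ := h.existsUnique_fiberBranch hc0 hsq (one_pow 2)
  obtain ⟨y, hy, hy_unique⟩ := h.existsUnique_fiberBranch hc0 hsq neg_one_sq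
  have hx_mem : x ∈ powDerivFiber d c := h.mem_powDerivFiber_iff.mpr ⟨1, one_pow 2, hx⟩
  refine Set.ncard_eq_two.mpr ⟨x, y, ?_, Set.ext fun z => ⟨fun hz => ?_, ?_⟩⟩
  · rintro rfl
    have hendpoint := hx.mul_add_one_eq_zero h.not_isSquare_neg_one (odd_three_pow k) hy
    rcases mul_eq_zero.mp hendpoint with hx0 | hx1
    · exact hc1 (by rw [← hx_mem, hx0]; simp [h.pos.ne'])
    · rw [add_eq_zero_iff_eq_neg] at hx1
      exact hc2 (by rw [← hx_mem, hx1, h.even.neg_pow]; simp [h.pos.ne'])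
  · obtain ⟨τ, hτ, hz⟩ := h.mem_powDerivFiber_iff.mp hz
    rcases sq_eq_one_iff.mp hτ with rfl | rfl
    exacts [Or.inl (hx_unique z hz), Or.inr (hy_unique z hz)]
  · rintro (rfl | rfl)
    exacts [hx_mem, h.mem_powDerivFiber_iff.mpr ⟨-1, neg_one_sq, hy⟩]

theorem ncard_powDerivFiber_of_not_isSquare (h : IsQuotientExponent F k d) (hc : c ≠ 0)
    (hsq : ¬ IsSquare (1 - c ^ (3 ^ k + 1))) : (powDerivFiber d c).ncard = 0 := by
  have := h.charP
  rw [Set.ncard_eq_zero, Set.eq_empty_iff_forall_notMem]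
  intro x hx
  obtain ⟨τ, hτ, hx⟩ := h.mem_powDerivFiber_iff.mp hx
  obtain ⟨κ, m, -, -, hB⟩ := h.exists_branchExpansion hc hτ
  exact hsq (hx.isSquare hB)

theorem ncard_powDerivFiber_eq_one_iff (h : IsQuotientExponent F k d) :
    (powDerivFiber d c).ncard = 1 ↔ c = 0 ∨ c = 1 ∨ c = -1 := by
  refine ⟨fun hcard => ?_, h.ncard_powDerivFiber_of_mem_primeField⟩
  by_contra hc
  by_cases hsq : IsSquare (1 - c ^ (3 ^ k + 1))
  · have := h.ncard_powDerivFiber_of_isSquare hc hsq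
    omega
  · have := h.ncard_powDerivFiber_of_not_isSquare (fun h0 => hc (Or.inl h0)) hsq
    omega

theorem ncard_powDerivFiber_le_two (h : IsQuotientExponent F k d) (c : F) :
    (powDerivFiber d c).ncard ≤ 2 := by
  by_cases hc : c = 0 ∨ c = 1 ∨ c = -1
  · exact (h.ncard_powDerivFiber_of_mem_primeField hc).trans_le one_le_two
  by_cases hsq : IsSquare (1 - c ^ (3 ^ k + 1))
  · exact (h.ncard_powDerivFiber_of_isSquare hc hsq).le
  · rw [h.ncard_powDerivFiber_of_not_isSquare (fun h0 => hc (Or.inl h0)) hsq]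
    exact zero_le_two

theorem ncard_powDerivFiber_eq_one_add (h : IsQuotientExponent F k d) {η : F → ℤ}
    (hη : ∀ c : F, c ≠ 0 → (IsSquare c → η c = 1) ∧ (¬ IsSquare c → η c = -1))
    (hc : ¬ (c = 0 ∨ c = 1 ∨ c = -1)) :
    ((powDerivFiber d c).ncard : ℤ) = 1 + η (1 - c ^ (3 ^ k + 1)) := by
  obtain ⟨hc0, hc1, hc2⟩ : c ≠ 0 ∧ c ≠ 1 ∧ c ≠ -1 := by simpa only [not_or] using hc
  have hη_disc := hη _ (h.one_sub_pow_ne_zero hc1 hc2)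
  by_cases hsq : IsSquare (1 - c ^ (3 ^ k + 1))
  · rw [h.ncard_powDerivFiber_of_isSquare hc hsq, hη_disc.1 hsq]
    norm_num
  · rw [h.ncard_powDerivFiber_of_not_isSquare hc0 hsq, hη_disc.2 hsq]
    norm_num

theorem card_ncard_powDerivFiber_eq_one (h : IsQuotientExponent F k d) :
    Nat.card {c : F // (powDerivFiber d c).ncard = 1} = 3 := by
  simp only [h.ncard_powDerivFiber_eq_one_iff]
  refine Set.ncard_eq_three.mpr ⟨0, 1, -1, zero_ne_one, (neg_ne_zero.mpr one_ne_zero).symm, ?_, rfl⟩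
  exact fun hsign => h.not_isSquare_neg_one (hsign ▸ IsSquare.one)

end IsQuotientExponent

end PowerFibers

section FiberCounting

variable {α : Type*} [Fintype α]

theorem card_eq_zero_add_card_eq_one_add_card_eq_two {N : α → ℕ} (hN : ∀ c, N c ≤ 2) :
    Nat.card {c // N c = 0} + Nat.card {c // N c = 1} + Nat.card {c // N c = 2} =
      Fintype.card α := by
  simp only [Nat.card_eq_fintype_card, Fintype.card_subtype, Finset.card_filter,
    ← Finset.sum_add_distrib]
  rw [Fintype.card_eq_sum_ones]
  refine Finset.sum_congr rfl fun c _ => ?_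
  have := hN c
  split_ifs <;> omega

theorem card_eq_one_add_two_mul_card_eq_two {N : α → ℕ} (hN : ∀ c, N c ≤ 2) :
    Nat.card {c // N c = 1} + 2 * Nat.card {c // N c = 2} = ∑ c, N c := by
  simp only [Nat.card_eq_fintype_card, Fintype.card_subtype, Finset.card_filter, Finset.mul_sum,
    ← Finset.sum_add_distrib]
  refine Finset.sum_congr rfl fun c _ => ?_
  have := hN c
  split_ifs <;> omega

theorem sum_card_fiber {β : Type*} [Fintype β] (g : α → β) :
    ∑ c, Nat.card {x // g x = c} = Fintype.card α := by
  rw [← Nat.card_eq_fintype_card, ← Nat.card_congr (Equiv.sigmaFiberEquiv g), Nat.card_sigma]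

theorem card_empty_fibers_eq_card_double_fibers {β : Type*} [Finite β] {g : β → β}
    (hg : ∀ c, Nat.card {x // g x = c} ≤ 2) :
    Nat.card {c // Nat.card {x // g x = c} = 0} = Nat.card {c // Nat.card {x // g x = c} = 2} := by
  have := Fintype.ofFinite β
  have hcount := card_eq_zero_add_card_eq_one_add_card_eq_two hg
  have hmass := card_eq_one_add_two_mul_card_eq_two hg
  rw [sum_card_fiber] at hmass
  omega

end FiberCounting

theorem stmt0_general (n k : ℕ) (hn : Odd n) (hgcd : Nat.gcd n k = 1)
    (F : Type*) [Field F] [Fintype F] (hF : Fintype.card F = 3 ^ n)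
    (d : ℕ) (hdpos : 0 < d) (hdeven : Even d) (hd : (3 ^ k + 1) * d ≡ 2 [MOD 3 ^ n - 1])
    (f : F → F) (hf : ∀ x, f x = x ^ d)
    (Δf : F → F) (hΔ : ∀ x, Δf x = f (x + 1) - f x)
    (η : F → ℤ)
    (hη : ∀ c : F, c ≠ 0 → (IsSquare c → η c = 1) ∧ (¬ IsSquare c → η c = -1)) :
    (∀ c : F, (c = 0 ∨ c = 1 ∨ c = -1) → Nat.card {x : F // Δf x = c} = 1) ∧
    (∀ c : F, ¬ (c = 0 ∨ c = 1 ∨ c = -1) →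
      (Nat.card {x : F // Δf x = c} : ℤ) = 1 + η (1 - c ^ (3 ^ k + 1))) ∧
    (∀ a : F, a ≠ 0 → ∀ b : F, Nat.card {x : F // f (x + a) - f x = b} ≤ 2) ∧
    Nat.card {c : F // Nat.card {x : F // Δf x = c} = 0} = (3 ^ n - 3) / 2 ∧
    Nat.card {c : F // Nat.card {x : F // Δf x = c} = 1} = 3 ∧
    Nat.card {c : F // Nat.card {x : F // Δf x = c} = 2} = (3 ^ n - 3) / 2 := by
  have h : IsQuotientExponent F k d := .of_card hn hgcd hF hdpos hdeven hd
  have hfiber (c : F) : Nat.card {x : F // Δf x = c} = (powDerivFiber d c).ncard :=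
    Nat.card_congr (Equiv.subtypeEquivRight fun x => by rw [hΔ, hf, hf, mem_powDerivFiber])
  have hle (c : F) : Nat.card {x : F // Δf x = c} ≤ 2 :=
    (hfiber c).trans_le (h.ncard_powDerivFiber_le_two c)
  have hone : Nat.card {c : F // Nat.card {x : F // Δf x = c} = 1} = 3 := by
    simp only [hfiber, h.card_ncard_powDerivFiber_eq_one]
  have hzero_two := card_empty_fibers_eq_card_double_fibers hle
  have htotal := card_eq_zero_add_card_eq_one_add_card_eq_two hle
  rw [hF] at htotal
  refine ⟨fun c hc => ?_, fun c hc => ?_, fun a ha b => ?_, by omega, hone, by omega⟩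
  · rw [hfiber, h.ncard_powDerivFiber_of_mem_primeField hc]
  · rw [hfiber, h.ncard_powDerivFiber_eq_one_add hη hc]
  · simp only [hf, card_pow_add_sub_pow_eq d ha, h.ncard_powDerivFiber_le_two]

theorem stmt0 (n k : ℕ) (hn : Odd n) (hnpos : 0 < n) (hk : Even k)
    (hgcd : Nat.gcd n k = 1)
    (F : Type*) [Field F] [Fintype F] (hF : Fintype.card F = 3 ^ n)
    (d : ℕ) (hdpos : 0 < d)
    (hd : (3 ^ k + 1) * d ≡ 3 ^ n + 1 [MOD 2 * (3 ^ n - 1)])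
    (f : F → F) (hf : ∀ x, f x = x ^ d)
    (Δf : F → F) (hΔ : ∀ x, Δf x = f (x + 1) - f x)
    (η : F → ℤ)
    (hη : ∀ c : F, c ≠ 0 → (IsSquare c → η c = 1) ∧ (¬ IsSquare c → η c = -1)) :
    (∀ c : F, (c = 0 ∨ c = 1 ∨ c = -1) → Nat.card {x : F // Δf x = c} = 1) ∧
    (∀ c : F, ¬ (c = 0 ∨ c = 1 ∨ c = -1) →
      (Nat.card {x : F // Δf x = c} : ℤ) = 1 + η (1 - c ^ (3 ^ k + 1))) ∧
    (∀ a : F, a ≠ 0 → ∀ b : F, Nat.card {x : F // f (x + a) - f x = b} ≤ 2) ∧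
    Nat.card {c : F // Nat.card {x : F // Δf x = c} = 0} = (3 ^ n - 3) / 2 ∧
    Nat.card {c : F // Nat.card {x : F // Δf x = c} = 1} = 3 ∧
    Nat.card {c : F // Nat.card {x : F // Δf x = c} = 2} = (3 ^ n - 3) / 2 := by
  exact stmt0_general n k hn hgcd F hF d hdpos (even_of_modEq_pow_add_one hn hk hd)
    (modEq_two_of_modEq_add_one (one_le_pow₀ (by norm_num)) hd) f hf Δf hΔ η hη
end

section
/- Let F be the finite field of order q=3^n with n odd, let k be an even nonnegative integer, let d₁=(3^n+1)/2, d₂=(3^k+1)/2, and let f₄ : F → F be f₄(x) = ((x+2)^{d₁}−(x−2)^{d₁})^{d₂} / ((x+2)^{d₂}−(x−2)^{d₂})^{d₁}. Let E be the quadratic extension of F, U_E = {x ∈ E× : x^{3^n} = x^{-1}}, and let η be the extended quadratic character of F (η(0)=0, nonzero squares to 1, nonsquares to −1). Then for every c ∈ F, the cardinality of {x ∈ U_E : f₄(x+x^{-1}) = c} equals 1+η(1−c²). -/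
/-!
Identify the circle `x ^ q = x⁻¹` with the projective line over `F` by the Cayley transform
`x = i (t - i) / (t + i)`, for which `x + x⁻¹ = 4 t / (t ^ 2 + 1)`. Then
`x + x⁻¹ + 2 = 2 (t + 1) ^ 2 / (t ^ 2 + 1)` and `x + x⁻¹ - 2 = -2 (t - 1) ^ 2 / (t ^ 2 + 1)`. The
squares turn the exponents `d₁` and `d₂` into `q + 1` and `p ^ k + 1`, where Frobenius applies, and
`f₄ (x + x⁻¹)` simplifies to `ε * 2 r / (r ^ 2 + 1)` with `r = t ^ d₂`, `ε = χ (2 (r ^ 2 + 1))` and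
`χ` the quadratic character. The exponent `d₂` is coprime to `q - 1`, so `r` runs through `F` as `t`
does. The point `(c, s) = ε (2 r, r ^ 2 - 1) / (r ^ 2 + 1)` lies on the conic `c ^ 2 + s ^ 2 = 1`;
for `c ≠ 0` it satisfies `ε = χ (1 + s)`, hence determines `r = (s + ε) / c`. So the value `c` is
taken once for each of the `1 + χ (1 - c ^ 2)` solutions `s` of `s ^ 2 = 1 - c ^ 2`. For `c = 0` the
two solutions come from `r = 0` and from the point at infinity `x = i`.
-/

open Function Set

section Arithmetic

theorem pow_mod_four_eq_three {p n : ℕ} (hp : p % 4 = 3) (hn : Odd n) : p ^ n % 4 = 3 := by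
  obtain ⟨m, rfl⟩ := hn
  rw [pow_succ, pow_mul]
  simp [Nat.mul_mod, Nat.pow_mod, hp]

theorem pow_mod_four_eq_one {p k : ℕ} (hp : Odd p) (hk : Even k) : p ^ k % 4 = 1 := by
  obtain ⟨m, rfl⟩ := hk
  obtain h | h : p % 4 = 1 ∨ p % 4 = 3 := by have := Nat.odd_iff.1 hp; omega
  all_goals simp [← two_mul, pow_mul, Nat.pow_mod, h]

theorem coprime_pow_sub_one_of_two_mul_eq_pow_add_one {p n k d : ℕ} (hn : Odd n) (hd : Odd d)
    (hdk : 2 * d = p ^ k + 1) : d.Coprime (p ^ n - 1) := by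
  set g := d.gcd (p ^ n - 1)
  have hgd : g ∣ d := Nat.gcd_dvd_left _ _
  have hg_add : g ∣ p ^ k + 1 := hdk ▸ hgd.mul_left 2
  have hg_two_mul : g ∣ p ^ (2 * k) - 1 := by
    rw [mul_comm, pow_mul, ← one_pow 2, Nat.sq_sub_sq]
    exact hg_add.mul_right _
  have hg_gcd : g ∣ p ^ (2 * k).gcd n - 1 := by
    rw [← Nat.pow_sub_one_gcd_pow_sub_one]
    exact Nat.dvd_gcd hg_two_mul (Nat.gcd_dvd_right _ _)
  have hgcd : (2 * k).gcd n ∣ k := by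
    rw [(Nat.coprime_two_left.2 hn).gcd_mul_left_cancel]
    exact Nat.gcd_dvd_left _ _
  have hg_sub : g ∣ p ^ k - 1 := hg_gcd.trans (Nat.pow_sub_one_dvd_pow_sub_one p hgcd)
  have hdiff : p ^ k + 1 - (p ^ k - 1) = 2 := by have := hd.pos; omega
  have hg_two : g ∣ 2 := hdiff ▸ Nat.dvd_sub hg_add hg_sub
  exact Nat.Coprime.eq_one_of_dvd ((Nat.coprime_two_right.2 hd).coprime_dvd_left hgd) hg_two

end Arithmetic

section FiniteField

variable {F : Type*} [Field F] [Fintype F]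

theorem pow_bijective_of_coprime_card_sub_one {d : ℕ} (hd0 : d ≠ 0)
    (hd : d.Coprime (Fintype.card F - 1)) : Bijective fun t : F ↦ t ^ d := by
  classical
  have hunits : (Nat.card Fˣ).Coprime d := by
    rw [Nat.card_eq_fintype_card, Fintype.card_units]
    exact hd.symm
  refine Finite.injective_iff_bijective.1 fun t s (hts : t ^ d = s ^ d) ↦ ?_
  by_cases ht : t = 0
  · rw [ht, zero_pow hd0] at hts
    rw [ht, eq_zero_of_pow_eq_zero hts.symm]
  have hs : s ≠ 0 := by
    rintro rfl
    exact ht (eq_zero_of_pow_eq_zero (hts.trans (zero_pow hd0)))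
  have := hunits.pow_left_bijective.injective (a₁ := Units.mk0 t ht) (a₂ := Units.mk0 s hs)
    (Units.ext hts)
  exact congrArg Units.val this

theorem pow_eq_quadraticChar_mul [DecidableEq F] {d : ℕ} (hd : 2 * d = Fintype.card F + 1)
    (b : F) : b ^ d = quadraticChar F b * b := by
  have hchar : ringChar F ≠ 2 := fun h ↦ by
    have := FiniteField.even_card_of_char_two h
    omega
  rw [quadraticChar_eq_pow_of_char_ne_two' hchar, ← pow_succ]
  congr 1
  omega

theorem mem_range_algebraMap_of_pow_card_eq {E : Type*} [Field E] [Algebra F E] {x : E}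
    (hx : x ^ Fintype.card F = x) : x ∈ range (algebraMap F E) := by
  have hsplits := Polynomial.splits_X_pow_nat_card_sub_X (K := F)
  rw [Nat.card_eq_fintype_card] at hsplits
  refine hsplits.mem_range_of_isRoot (FiniteField.X_pow_card_sub_X_ne_zero F Fintype.one_lt_card) ?_
  simp [hx]

end FiniteField

theorem sq_add_one_ne_zero_of_not_isSquare {F : Type*} [Field F] (hF : ¬ IsSquare (-1 : F))
    (r : F) : r ^ 2 + 1 ≠ 0 :=
  fun h ↦ hF ⟨r, by linear_combination -h⟩

theorem two_ne_zero_of_not_isSquare {F : Type*} [Field F] (hF : ¬ IsSquare (-1 : F)) :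
    (2 : F) ≠ 0 :=
  fun h ↦ hF ⟨1, by linear_combination -h⟩

theorem one_add_mul_ne_zero_of_sq_eq {F : Type*} [Field F] {c s ε : F} (hc : c ≠ 0)
    (hs : s ^ 2 = 1 - c ^ 2) (hε : ε ^ 2 = 1) : 1 + ε * s ≠ 0 :=
  fun h ↦ pow_ne_zero 2 hc (by linear_combination hs + (1 - ε * s) * h + s ^ 2 * hε)

theorem div_sq_add_one_of_sq_eq {F : Type*} [Field F] {c s ε : F} (hc : c ≠ 0)
    (hs : s ^ 2 = 1 - c ^ 2) (hε : ε ^ 2 = 1) :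
    ((s + ε) / c) ^ 2 + 1 = 2 * (1 + ε * s) / c ^ 2 := by
  field_simp
  linear_combination hs + hε

theorem card_mod_four_eq_three_of_not_isSquare {F : Type*} [Field F] [Fintype F]
    (hF : ¬ IsSquare (-1 : F)) : Fintype.card F % 4 = 3 := by
  simpa [FiniteField.isSquare_neg_one_iff] using hF

section Conic

variable {F : Type*} [Field F] [Fintype F] [DecidableEq F]

/-- The first coordinate `2 r / (r ^ 2 + 1)` of the parametrization by slopes of the conic
`c ^ 2 + s ^ 2 = 1`, multiplied by the sign `χ (2 (r ^ 2 + 1))`, where `χ` is the quadratic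
character of `F`. It is `0` at the `r` with `r ^ 2 = -1`. -/
def signedConicCoord (r : F) : F :=
  (quadraticChar F (2 * (r ^ 2 + 1)) : F) * (2 * r / (r ^ 2 + 1))

theorem intCast_quadraticChar_sq {a : F} (ha : a ≠ 0) : (quadraticChar F a : F) ^ 2 = 1 :=
  mod_cast congrArg (Int.cast : ℤ → F) (quadraticChar_sq_one ha)

theorem quadraticChar_eq_of_mul_eq_sq {a b c : F} (hc : c ≠ 0) (h : a * b = c ^ 2) :
    quadraticChar F a = quadraticChar F b := by
  have ha : a ≠ 0 := left_ne_zero_of_mul (h ▸ pow_ne_zero 2 hc)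
  have hmul : quadraticChar F a * quadraticChar F b = 1 := by
    rw [← map_mul, h, quadraticChar_sq_one' hc]
  linear_combination quadraticChar F b * quadraticChar_sq_one ha - quadraticChar F a * hmul

theorem signedConicCoord_eq_zero_iff (hF : ¬ IsSquare (-1 : F)) {r : F} :
    signedConicCoord r = 0 ↔ r = 0 := by
  have h2 := two_ne_zero_of_not_isSquare hF
  have hr := sq_add_one_ne_zero_of_not_isSquare hF r
  have hsign : (quadraticChar F (2 * (r ^ 2 + 1)) : F) ≠ 0 := by
    apply ne_zero_pow two_ne_zero
    rw [intCast_quadraticChar_sq (mul_ne_zero h2 hr)]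
    exact one_ne_zero
  rw [signedConicCoord, mul_eq_zero_iff_left hsign, div_eq_zero_iff, or_iff_left hr,
    mul_eq_zero_iff_left h2]

theorem quadraticChar_two_mul_div_sq_add_one (hF : ringChar F ≠ 2) {c s ε : F} (hc : c ≠ 0)
    (hs : s ^ 2 = 1 - c ^ 2) (hε : ε ^ 2 = 1) :
    quadraticChar F (2 * (((s + ε) / c) ^ 2 + 1)) = quadraticChar F (1 + s) := by
  have hsign : quadraticChar F (1 + ε * s) = quadraticChar F (1 + s) := by
    rcases sq_eq_one_iff.1 hε with rfl | rfl
    · rw [one_mul]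
    · exact quadraticChar_eq_of_mul_eq_sq hc (by linear_combination -hs)
  have hsq : 2 * (2 * (1 + ε * s) / c ^ 2) = (2 / c) ^ 2 * (1 + ε * s) := by ring
  rw [div_sq_add_one_of_sq_eq hc hs hε, hsq, map_mul,
    quadraticChar_sq_one' (div_ne_zero (Ring.two_ne_zero hF) hc), one_mul, hsign]

theorem signedConicCoord_add_quadraticChar_div (hF : ringChar F ≠ 2) {c s : F} (hc : c ≠ 0)
    (hs : s ^ 2 = 1 - c ^ 2) : signedConicCoord ((s + quadraticChar F (1 + s)) / c) = c := by
  have hs1 : 1 + s ≠ 0 := by simpa using one_add_mul_ne_zero_of_sq_eq hc hs (one_pow 2)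
  have hε := intCast_quadraticChar_sq hs1
  rw [signedConicCoord, quadraticChar_two_mul_div_sq_add_one hF hc hs hε,
    div_sq_add_one_of_sq_eq hc hs hε]
  generalize (quadraticChar F (1 + s) : F) = ε at hε ⊢
  have h2 : (2 : F) ≠ 0 := Ring.two_ne_zero hF
  have hεs : 1 + ε * s ≠ 0 := one_add_mul_ne_zero_of_sq_eq hc hs hε
  field_simp
  linear_combination hε

theorem sq_add_one_ne_zero_of_signedConicCoord_ne_zero {r : F} (h : signedConicCoord r ≠ 0) :
    r ^ 2 + 1 ≠ 0 :=
  fun hr ↦ h (by rw [signedConicCoord, hr, div_zero, mul_zero])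

theorem mul_sub_quadraticChar_sq_of_signedConicCoord_eq (hF : ringChar F ≠ 2) {r c : F} (hc : c ≠ 0)
    (h : signedConicCoord r = c) :
    (c * r - quadraticChar F (2 * (r ^ 2 + 1))) ^ 2 = 1 - c ^ 2 := by
  have hr : r ^ 2 + 1 ≠ 0 := sq_add_one_ne_zero_of_signedConicCoord_ne_zero (h ▸ hc)
  have hε := intCast_quadraticChar_sq (mul_ne_zero (Ring.two_ne_zero hF) hr)
  rw [signedConicCoord] at h
  generalize (quadraticChar F (2 * (r ^ 2 + 1)) : F) = ε at h hε ⊢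
  rw [mul_div_assoc', div_eq_iff hr] at h
  linear_combination hε - c * h

theorem bijOn_signedConicCoord_fiber (hF : ringChar F ≠ 2) {c : F} (hc : c ≠ 0) :
    BijOn (fun r ↦ c * r - (quadraticChar F (2 * (r ^ 2 + 1)) : F))
      {r | signedConicCoord r = c} {s | s ^ 2 = 1 - c ^ 2} := by
  refine InvOn.bijOn (f' := fun s ↦ (s + (quadraticChar F (1 + s) : F)) / c) ⟨?_, ?_⟩
    (fun r ↦ mul_sub_quadraticChar_sq_of_signedConicCoord_eq hF hc)
    (fun s ↦ signedConicCoord_add_quadraticChar_div hF hc)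
  · intro r (hr : signedConicCoord r = c)
    have hr0 : r ^ 2 + 1 ≠ 0 := sq_add_one_ne_zero_of_signedConicCoord_ne_zero (hr ▸ hc)
    have hε := intCast_quadraticChar_sq (mul_ne_zero (Ring.two_ne_zero hF) hr0)
    have hsign := quadraticChar_two_mul_div_sq_add_one hF hc
      (mul_sub_quadraticChar_sq_of_signedConicCoord_eq hF hc hr) hε
    rw [sub_add_cancel, mul_div_cancel_left₀ _ hc] at hsign
    simp only [← hsign, sub_add_cancel, mul_div_cancel_left₀ _ hc]
  · intro s (hs : s ^ 2 = 1 - c ^ 2)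
    have hs1 : 1 + s ≠ 0 := by simpa using one_add_mul_ne_zero_of_sq_eq hc hs (one_pow 2)
    have hε := intCast_quadraticChar_sq hs1
    simp only [quadraticChar_two_mul_div_sq_add_one hF hc hs hε, mul_div_cancel₀ _ hc,
      add_sub_cancel_right]

theorem ncard_signedConicCoord_fiber (hF : ¬ IsSquare (-1 : F)) (c : F) :
    ({r : F | signedConicCoord r = c}.ncard + if c = 0 then 1 else 0 : ℤ) =
      1 + quadraticChar F (1 - c ^ 2) := by
  have hchar : ringChar F ≠ 2 := fun h ↦ hF (FiniteField.isSquare_of_char_two h _)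
  split_ifs with hc
  · simp [hc, signedConicCoord_eq_zero_iff hF]
  · rw [(bijOn_signedConicCoord_fiber hchar hc).ncard_eq, ncard_eq_toFinset_card',
      quadraticChar_card_sqrts hchar]
    ring

end Conic

section PowDiffQuotient

variable {F : Type*} [Field F]

/-- The map `f₄` of the theorem, for arbitrary exponents. Where the denominator vanishes the value
is `0`, as `x / 0 = 0`. -/
def powDiffQuotient (d₁ d₂ : ℕ) (y : F) : F :=
  ((y + 2) ^ d₁ - (y - 2) ^ d₁) ^ d₂ / ((y + 2) ^ d₂ - (y - 2) ^ d₂) ^ d₁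

theorem four_mul_div_add_two_pow {t : F} (ht : t ^ 2 + 1 ≠ 0) (d : ℕ) :
    (4 * t / (t ^ 2 + 1) + 2) ^ d = 2 ^ d * (t + 1) ^ (2 * d) / (t ^ 2 + 1) ^ d := by
  have : 4 * t / (t ^ 2 + 1) + 2 = 2 * (t + 1) ^ 2 / (t ^ 2 + 1) := by
    field_simp
    ring
  rw [this, div_pow, mul_pow, ← pow_mul]

theorem four_mul_div_sub_two_pow {t : F} (ht : t ^ 2 + 1 ≠ 0) (d : ℕ) :
    (4 * t / (t ^ 2 + 1) - 2) ^ d = (-1) ^ d * (2 ^ d * (t - 1) ^ (2 * d) / (t ^ 2 + 1) ^ d) := by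
  have : 4 * t / (t ^ 2 + 1) - 2 = -1 * (2 * (t - 1) ^ 2 / (t ^ 2 + 1)) := by
    field_simp
    ring
  rw [this, mul_pow, div_pow, mul_pow, ← pow_mul]

theorem four_mul_div_pow_sub_pow_of_even [Fintype F] {d : ℕ}
    (hd : 2 * d = Fintype.card F + 1) (hd' : Even d) {t : F} (ht : t ^ 2 + 1 ≠ 0) :
    (4 * t / (t ^ 2 + 1) + 2) ^ d - (4 * t / (t ^ 2 + 1) - 2) ^ d =
      2 ^ d * (4 * t) / (t ^ 2 + 1) ^ d := by
  have hfrob (u : F) : u ^ (2 * d) = u * u := by rw [hd, pow_succ, FiniteField.pow_card]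
  rw [four_mul_div_add_two_pow ht, four_mul_div_sub_two_pow ht, hd'.neg_one_pow, hfrob, hfrob]
  ring

theorem four_mul_div_pow_sub_pow_of_odd {p k d : ℕ} [Fact p.Prime] [CharP F p]
    (hd : 2 * d = p ^ k + 1) (hd' : Odd d) {t : F} (ht : t ^ 2 + 1 ≠ 0) :
    (4 * t / (t ^ 2 + 1) + 2) ^ d - (4 * t / (t ^ 2 + 1) - 2) ^ d =
      2 ^ d * (2 * ((t ^ d) ^ 2 + 1)) / (t ^ 2 + 1) ^ d := by
  have hadd : (t + 1) ^ (2 * d) = (t ^ p ^ k + 1) * (t + 1) := by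
    rw [hd, pow_succ, add_pow_char_pow, one_pow]
  have hsub : (t - 1) ^ (2 * d) = (t ^ p ^ k - 1) * (t - 1) := by
    rw [hd, pow_succ, sub_pow_char_pow, one_pow]
  have hsq : (t ^ d) ^ 2 = t ^ p ^ k * t := by rw [← pow_mul, mul_comm, hd, pow_succ]
  rw [four_mul_div_add_two_pow ht, four_mul_div_sub_two_pow ht, hd'.neg_one_pow, hadd, hsub, hsq]
  ring

theorem four_pow_eq_four {p k d : ℕ} [Fact p.Prime] [CharP F p] (hd : 2 * d = p ^ k + 1) :
    (4 : F) ^ d = 4 := by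
  have htwo : (2 : F) ^ p ^ k = 2 := by
    rw [← one_add_one_eq_two, add_pow_char_pow, one_pow]
  calc (4 : F) ^ d = 2 ^ (2 * d) := by rw [pow_mul]; norm_num
    _ = 4 := by rw [hd, pow_succ, htwo]; norm_num

theorem powDiffQuotient_four_mul_div [Fintype F] [DecidableEq F] {p k d₁ d₂ : ℕ} [Fact p.Prime]
    [CharP F p] (hF : ¬ IsSquare (-1 : F)) (hd₁ : 2 * d₁ = Fintype.card F + 1)
    (hd₂ : 2 * d₂ = p ^ k + 1) (hd₂' : Odd d₂) (t : F) :
    powDiffQuotient d₁ d₂ (4 * t / (t ^ 2 + 1)) = signedConicCoord (t ^ d₂) := by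
  have h2 := two_ne_zero_of_not_isSquare hF
  have ht := sq_add_one_ne_zero_of_not_isSquare hF t
  have hr := sq_add_one_ne_zero_of_not_isSquare hF (t ^ d₂)
  have hq := card_mod_four_eq_three_of_not_isSquare hF
  have hd₁' : Even d₁ := Nat.even_iff.2 (by omega)
  calc powDiffQuotient d₁ d₂ (4 * t / (t ^ 2 + 1))
    _ = (2 ^ d₁ * (4 * t) / (t ^ 2 + 1) ^ d₁) ^ d₂ /
          (2 ^ d₂ * (2 * ((t ^ d₂) ^ 2 + 1)) / (t ^ 2 + 1) ^ d₂) ^ d₁ := by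
      rw [powDiffQuotient, four_mul_div_pow_sub_pow_of_even hd₁ hd₁' ht,
        four_mul_div_pow_sub_pow_of_odd hd₂ hd₂' ht]
    _ = (4 * t) ^ d₂ / (2 * ((t ^ d₂) ^ 2 + 1)) ^ d₁ := by
      simp only [div_pow, mul_pow, ← pow_mul, mul_comm d₂ d₁]
      field_simp
    _ = 4 * t ^ d₂ / (quadraticChar F (2 * ((t ^ d₂) ^ 2 + 1)) * (2 * ((t ^ d₂) ^ 2 + 1))) := by
      rw [mul_pow, four_pow_eq_four hd₂, pow_eq_quadraticChar_mul hd₁]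
    _ = signedConicCoord (t ^ d₂) := by
      have hε := intCast_quadraticChar_sq (mul_ne_zero h2 hr)
      rw [signedConicCoord]
      generalize (quadraticChar F (2 * ((t ^ d₂) ^ 2 + 1)) : F) = ε at hε ⊢
      have hε0 : ε ≠ 0 := by rintro rfl; simp at hε
      field_simp
      linear_combination -4 * t ^ d₂ * hε

end PowDiffQuotient

section Cayley

variable {E : Type*} [Field E] {i : E}

theorem ne_zero_of_sq_eq_neg_one (hi : i ^ 2 = -1) : i ≠ 0 := by
  rintro rfl
  simp at hi

theorem inv_eq_neg_of_sq_eq_neg_one (hi : i ^ 2 = -1) : i⁻¹ = -i :=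
  inv_eq_of_mul_eq_one_right (by linear_combination -hi)

theorem pow_card_eq_neg_of_sq_eq_neg_one {F : Type*} [Field F] [Fintype F]
    (hF : ¬ IsSquare (-1 : F)) (hi : i ^ 2 = -1) :
    i ^ Fintype.card F = -i := by
  have hq := card_mod_four_eq_three_of_not_isSquare hF
  rw [show Fintype.card F = 2 * (2 * (Fintype.card F / 4) + 1) + 1 by omega, pow_succ, pow_mul, hi,
    Odd.neg_one_pow ⟨_, rfl⟩, neg_one_mul]

variable {F : Type*} [Field F] [Algebra F E]

/-- The unit circle `{x ∈ Eˣ | x ^ q = x⁻¹}` of `E` over a subfield of order `q`. The condition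
`x ≠ 0` matters since `0⁻¹ = 0`. -/
def unitCircle (E : Type*) [Field E] (q : ℕ) : Set E := {x | x ≠ 0 ∧ x ^ q = x⁻¹}

/-- The Cayley transform from the line over `F` to the unit circle of `E`, where `i ^ 2 = -1`,
normalized so that the missing point at infinity is `i`. -/
def cayley (i : E) (t : F) : E := i * (algebraMap F E t - i) / (algebraMap F E t + i)

theorem algebraMap_add_ne_zero (hF : ¬ IsSquare (-1 : F)) (hi : i ^ 2 = -1) (t : F) :
    algebraMap F E t + i ≠ 0 := by
  intro h
  apply sq_add_one_ne_zero_of_not_isSquare hF t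
  apply (algebraMap F E).injective
  rw [map_add, map_pow, map_one, map_zero]
  linear_combination (algebraMap F E t - i) * h + hi

theorem algebraMap_sub_ne_zero (hF : ¬ IsSquare (-1 : F)) (hi : i ^ 2 = -1) (t : F) :
    algebraMap F E t - i ≠ 0 := by
  rw [sub_eq_add_neg]
  exact algebraMap_add_ne_zero hF (by rw [neg_sq, hi]) t

theorem cayley_ne_zero (hF : ¬ IsSquare (-1 : F)) (hi : i ^ 2 = -1) (t : F) : cayley i t ≠ 0 :=
  div_ne_zero (mul_ne_zero (ne_zero_of_sq_eq_neg_one hi) (algebraMap_sub_ne_zero hF hi t))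
    (algebraMap_add_ne_zero hF hi t)

theorem inv_cayley (hi : i ^ 2 = -1) (t : F) : (cayley i t)⁻¹ = cayley (-i) t := by
  rw [cayley, cayley, inv_div, mul_comm i, ← div_div, div_eq_mul_inv _ i,
    inv_eq_neg_of_sq_eq_neg_one hi]
  ring

theorem cayley_add_inv (hF : ¬ IsSquare (-1 : F)) (hi : i ^ 2 = -1) (t : F) :
    cayley i t + (cayley i t)⁻¹ = algebraMap F E (4 * t / (t ^ 2 + 1)) := by
  have hadd := algebraMap_add_ne_zero hF hi t
  have hsub := algebraMap_sub_ne_zero hF hi t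
  have hfactor : algebraMap F E t ^ 2 + 1 = (algebraMap F E t + i) * (algebraMap F E t - i) := by
    linear_combination hi
  rw [inv_cayley hi, cayley, cayley, sub_neg_eq_add, ← sub_eq_add_neg]
  simp only [map_div₀, map_mul, map_add, map_pow, map_one, map_ofNat, hfactor]
  field_simp
  linear_combination -4 * algebraMap F E t * hi

theorem cayley_injective (hF : ¬ IsSquare (-1 : F)) (hi : i ^ 2 = -1) :
    Injective (cayley i : F → E) := by
  intro t s h
  have h2 : (2 : E) ≠ 0 := by
    rw [← map_ofNat (algebraMap F E) 2]
    exact (map_ne_zero _).2 (two_ne_zero_of_not_isSquare hF)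
  rw [cayley, cayley, div_eq_div_iff (algebraMap_add_ne_zero hF hi t)
    (algebraMap_add_ne_zero hF hi s)] at h
  apply (algebraMap F E).injective
  apply mul_left_cancel₀ h2
  linear_combination 2 * (algebraMap F E t - algebraMap F E s) * hi - h

theorem notMem_range_cayley (hF : ¬ IsSquare (-1 : F)) (hi : i ^ 2 = -1) :
    i ∉ range (cayley i : F → E) := by
  rintro ⟨t, h⟩
  have h2 : (2 : E) ≠ 0 := by
    rw [← map_ofNat (algebraMap F E) 2]
    exact (map_ne_zero _).2 (two_ne_zero_of_not_isSquare hF)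
  rw [cayley, div_eq_iff (algebraMap_add_ne_zero hF hi t)] at h
  exact h2 (by linear_combination h + 2 * hi)

theorem map_cayley (σ : E →ₐ[F] E) (t : F) : σ (cayley i t) = cayley (σ i) t := by
  simp [cayley]

variable [Fintype F]

theorem cayley_mem_unitCircle (hF : ¬ IsSquare (-1 : F)) (hi : i ^ 2 = -1) (t : F) :
    cayley i t ∈ unitCircle E (Fintype.card F) := by
  refine ⟨cayley_ne_zero hF hi t, ?_⟩
  calc cayley i t ^ Fintype.card F = cayley (i ^ Fintype.card F) t :=
        map_cayley (FiniteField.frobeniusAlgHom F E) t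
    _ = (cayley i t)⁻¹ := by rw [pow_card_eq_neg_of_sq_eq_neg_one hF hi, inv_cayley hi]

theorem neg_mul_add_div_sub_pow_card (hF : ¬ IsSquare (-1 : F)) (hi : i ^ 2 = -1) {x : E}
    (hx : x ∈ unitCircle E (Fintype.card F)) (hxi : x - i ≠ 0) :
    (-i * (x + i) / (x - i)) ^ Fintype.card F = -i * (x + i) / (x - i) := by
  obtain ⟨hx0, hxq⟩ := hx
  have hden : x⁻¹ + i ≠ 0 := by
    intro h
    have h' : 1 + x * i = 0 := by rw [← mul_inv_cancel₀ hx0, ← mul_add, h, mul_zero]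
    exact hxi (by linear_combination (-i) * h' + x * hi)
  calc (-i * (x + i) / (x - i)) ^ Fintype.card F
    _ = i * (x⁻¹ - i) / (x⁻¹ + i) := by
      have hσi : FiniteField.frobeniusAlgHom F E i = -i := pow_card_eq_neg_of_sq_eq_neg_one hF hi
      have hσx : FiniteField.frobeniusAlgHom F E x = x⁻¹ := hxq
      change FiniteField.frobeniusAlgHom F E _ = _
      rw [map_div₀, map_mul, map_neg, map_add, map_sub, hσi, hσx]
      ring
    _ = -i * (x + i) / (x - i) := by
      rw [div_eq_div_iff hden hxi]
      field_simp
      linear_combination 2 * i * x * hi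

theorem mem_range_cayley (hF : ¬ IsSquare (-1 : F)) (hi : i ^ 2 = -1) {x : E}
    (hx : x ∈ unitCircle E (Fintype.card F)) (hxi : x ≠ i) : x ∈ range (cayley i : F → E) := by
  have hxi' : x - i ≠ 0 := sub_ne_zero.2 hxi
  obtain ⟨t, ht⟩ :=
    mem_range_algebraMap_of_pow_card_eq (neg_mul_add_div_sub_pow_card hF hi hx hxi')
  refine ⟨t, ?_⟩
  rw [cayley, div_eq_iff (algebraMap_add_ne_zero hF hi t), ht]
  field_simp
  ring

theorem unitCircle_eq_insert_range_cayley (hF : ¬ IsSquare (-1 : F)) (hi : i ^ 2 = -1) :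
    unitCircle E (Fintype.card F) = insert i (range (cayley i : F → E)) := by
  refine Subset.antisymm (fun x hx ↦ or_iff_not_imp_left.2 (mem_range_cayley hF hi hx)) ?_
  rintro _ (rfl | ⟨t, rfl⟩)
  · refine ⟨ne_zero_of_sq_eq_neg_one hi, ?_⟩
    rw [pow_card_eq_neg_of_sq_eq_neg_one hF hi, inv_eq_neg_of_sq_eq_neg_one hi]
  · exact cayley_mem_unitCircle hF hi t

theorem ncard_unitCircle_fiber [DecidableEq F] (hF : ¬ IsSquare (-1 : F)) (hi : i ^ 2 = -1)
    (f : F → F) (c : F) :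
    {x : E | x ∈ unitCircle E (Fintype.card F) ∧
        ∃ y : F, algebraMap F E y = x + x⁻¹ ∧ f y = c}.ncard =
      {t : F | f (4 * t / (t ^ 2 + 1)) = c}.ncard + if f 0 = c then 1 else 0 := by
  set S := {x : E | x ∈ unitCircle E (Fintype.card F) ∧
    ∃ y : F, algebraMap F E y = x + x⁻¹ ∧ f y = c}
  set T := {t : F | f (4 * t / (t ^ 2 + 1)) = c}
  have hcayley (t : F) : cayley i t ∈ S ↔ t ∈ T := by
    simp only [S, T, Set.mem_ofPred_eq, cayley_mem_unitCircle hF hi, cayley_add_inv hF hi,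
      (algebraMap F E).injective.eq_iff, true_and, exists_eq_left]
  have hi_mem : i ∈ S ↔ f 0 = c := by
    simp [S, unitCircle_eq_insert_range_cayley hF hi, inv_eq_neg_of_sq_eq_neg_one hi]
  have hS : S ⊆ insert i (range (cayley i : F → E)) :=
    fun x hx ↦ unitCircle_eq_insert_range_cayley hF hi ▸ hx.1
  have hdiff : S \ {i} = cayley i '' T := by
    ext x
    constructor
    · rintro ⟨hx, hxi⟩
      obtain ⟨t, rfl⟩ := (hS hx).resolve_left hxi
      exact ⟨t, (hcayley t).1 hx, rfl⟩
    · rintro ⟨t, ht, rfl⟩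
      exact ⟨(hcayley t).2 ht, fun h ↦ notMem_range_cayley hF hi ⟨t, h⟩⟩
  have hfinite : S.Finite := ((finite_range _).insert i).subset hS
  rw [← ncard_image_of_injective T (cayley_injective hF hi), ← hdiff]
  split_ifs with hc
  · exact (ncard_sdiff_singleton_add_one (hi_mem.2 hc) hfinite).symm
  · rw [sdiff_singleton_eq_self (mt hi_mem.1 hc), add_zero]

theorem ncard_unitCircle_powDiffQuotient_fiber [DecidableEq F] {p k d₁ d₂ : ℕ} [Fact p.Prime]
    [CharP F p] (hF : ¬ IsSquare (-1 : F)) (hi : i ^ 2 = -1) (hd₁ : 2 * d₁ = Fintype.card F + 1)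
    (hd₂ : 2 * d₂ = p ^ k + 1) (hd₂' : Odd d₂) (hcoprime : d₂.Coprime (Fintype.card F - 1))
    (c : F) :
    ({x : E | x ∈ unitCircle E (Fintype.card F) ∧
        ∃ y : F, algebraMap F E y = x + x⁻¹ ∧ powDiffQuotient d₁ d₂ y = c}.ncard : ℤ) =
      1 + quadraticChar F (1 - c ^ 2) := by
  have hd₂0 : d₂ ≠ 0 := hd₂'.pos.ne'
  have hpow : Bijective fun t : F ↦ t ^ d₂ := pow_bijective_of_coprime_card_sub_one hd₂0 hcoprime
  have hvalue := powDiffQuotient_four_mul_div hF hd₁ hd₂ hd₂'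
  have hzero : powDiffQuotient d₁ d₂ (0 : F) = 0 := by
    simpa [hd₂0, signedConicCoord] using hvalue 0
  have hfiber : {t : F | signedConicCoord (t ^ d₂) = c}.ncard =
      {r : F | signedConicCoord r = c}.ncard :=
    ncard_preimage_of_injective_subset_range (s := {r : F | signedConicCoord r = c}) hpow.injective
      (hpow.surjective.range_eq ▸ subset_univ _)
  rw [ncard_unitCircle_fiber hF hi, ← ncard_signedConicCoord_fiber hF]
  simp only [hvalue, hzero, hfiber, eq_comm (a := (0 : F)), Nat.cast_add, Nat.cast_ite,
    Nat.cast_one, Nat.cast_zero]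

end Cayley

theorem eq_quadraticChar_of_isSquare {F : Type*} [Field F] [Fintype F] [DecidableEq F] {η : F → ℤ}
    (hη0 : η 0 = 0) (hη : ∀ c : F, c ≠ 0 → (IsSquare c → η c = 1) ∧ (¬ IsSquare c → η c = -1)) :
    η = quadraticChar F := by
  ext a
  by_cases ha : a = 0
  · rw [ha, hη0, quadraticChar_zero]
  · rw [quadraticChar_apply, quadraticCharFun, if_neg ha]
    split_ifs with hsq
    exacts [(hη a ha).1 hsq, (hη a ha).2 hsq]

theorem isSquare_neg_one_of_card_eq_sq {E : Type*} [Field E] [Fintype E] {m : ℕ}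
    (hE : Fintype.card E = m ^ 2) : IsSquare (-1 : E) := by
  rw [FiniteField.isSquare_neg_one_iff, hE, Nat.pow_mod]
  have : m % 4 < 4 := Nat.mod_lt _ four_pos
  interval_cases m % 4 <;> decide

theorem stmt18_general (p n k : ℕ) [Fact p.Prime] (hp : p % 4 = 3) (hn : Odd n) (hk : Even k)
    (F E : Type*) [Field F] [Fintype F] [Field E] [Algebra F E]
    (hF : Fintype.card F = p ^ n) (hE : IsSquare (-1 : E))
    (d₁ d₂ : ℕ) (hd₁ : d₁ = (p ^ n + 1) / 2) (hd₂ : d₂ = (p ^ k + 1) / 2)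
    (f₄ : F → F)
    (hf₄ : ∀ x : F,
      f₄ x = ((x + 2) ^ d₁ - (x - 2) ^ d₁) ^ d₂ / ((x + 2) ^ d₂ - (x - 2) ^ d₂) ^ d₁)
    (η : F → ℤ) (hη0 : η 0 = 0)
    (hη : ∀ c : F, c ≠ 0 → (IsSquare c → η c = 1) ∧ (¬ IsSquare c → η c = -1))
    (c : F) :
    (Nat.card {x : E // (x ≠ 0 ∧ x ^ (p ^ n) = x⁻¹) ∧
      ∃ y : F, algebraMap F E y = x + x⁻¹ ∧ f₄ y = c} : ℤ) = 1 + η (1 - c ^ 2) := by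
  classical
  have := charP_of_card_eq_prime_pow hF
  have hpn : p ^ n % 4 = 3 := pow_mod_four_eq_three hp hn
  have hpk : p ^ k % 4 = 1 := pow_mod_four_eq_one (Nat.odd_iff.2 (by omega)) hk
  have hF' : ¬ IsSquare (-1 : F) := by simpa [FiniteField.isSquare_neg_one_iff, hF] using hpn
  have hd₁q : 2 * d₁ = Fintype.card F + 1 := by omega
  have hd₂q : 2 * d₂ = p ^ k + 1 := by omega
  have hd₂_odd : Odd d₂ := Nat.odd_iff.2 (by omega)
  have hcoprime : d₂.Coprime (Fintype.card F - 1) :=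
    hF ▸ coprime_pow_sub_one_of_two_mul_eq_pow_add_one hn hd₂_odd hd₂q
  obtain rfl : f₄ = powDiffQuotient d₁ d₂ := funext hf₄
  obtain ⟨i, hi⟩ := hE
  rw [eq_quadraticChar_of_isSquare hη0 hη, ← hF]
  exact ncard_unitCircle_powDiffQuotient_fiber hF' (by rw [hi, sq]) hd₁q hd₂q hd₂_odd hcoprime c

theorem stmt18 (n k : ℕ) (hn : Odd n) (hk : Even k)
    (F E : Type*) [Field F] [Fintype F] [Field E] [Fintype E] [Algebra F E]
    (hF : Fintype.card F = 3 ^ n) (hE : Fintype.card E = Fintype.card F ^ 2)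
    (d₁ d₂ : ℕ) (hd₁ : d₁ = (3 ^ n + 1) / 2) (hd₂ : d₂ = (3 ^ k + 1) / 2)
    (f₄ : F → F)
    (hf₄ : ∀ x : F,
      f₄ x = ((x + 2) ^ d₁ - (x - 2) ^ d₁) ^ d₂ / ((x + 2) ^ d₂ - (x - 2) ^ d₂) ^ d₁)
    (η : F → ℤ) (hη0 : η 0 = 0)
    (hη : ∀ c : F, c ≠ 0 → (IsSquare c → η c = 1) ∧ (¬ IsSquare c → η c = -1))
    (c : F) :
    (Nat.card {x : E // (x ≠ 0 ∧ x ^ (3 ^ n) = x⁻¹) ∧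
      ∃ y : F, algebraMap F E y = x + x⁻¹ ∧ f₄ y = c} : ℤ) = 1 + η (1 - c ^ 2) := by
  have : Fact (Nat.Prime 3) := ⟨Nat.prime_three⟩
  exact stmt18_general 3 n k rfl hn hk F E hF (isSquare_neg_one_of_card_eq_sq hE) d₁ d₂ hd₁ hd₂ f₄
    hf₄ η hη0 hη c
end
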